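/- The largest induced forest of T₆ has order exactly 4: there exists a set of 4 vertices of T₆ that induces an acyclic subgraph, and every set of vertices of T₆ that induces an acyclic subgraph has at most 4 elements. -/

import Mathlib

/-- The graph `T₆`: the complete bipartite graph `K_{3,3}` with parts
`{inl 0, inl 1, inl 2}` and `{inr 0, inr 1, inr 2}`, minus the edge `inl 2 — inr 2`. -/
def T6graph : SimpleGraph (Fin 3 ⊕ Fin 3) where
  Adj x y := (∃ i j, x = Sum.inl i ∧ y = Sum.inr j ∧ ¬(i = 2 ∧ j = 2)) ∨
             (∃ i j, x = Sum.inr j ∧ y = Sum.inl i ∧ ¬(i = 2 ∧ j = 2))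
  symm := by
    constructor
    rintro x y (⟨i, j, h1, h2, h3⟩ | ⟨i, j, h1, h2, h3⟩)
    · exact Or.inr ⟨i, j, h2, h1, h3⟩
    · exact Or.inl ⟨i, j, h2, h1, h3⟩
  loopless := by
    constructor
    rintro x (⟨i, j, h1, h2, -⟩ | ⟨i, j, h1, h2, -⟩) <;> simp_all

theorem T6_adj_iff (x y : Fin 3 ⊕ Fin 3) : T6graph.Adj x y ↔
    ((∃ i j, x = Sum.inl i ∧ y = Sum.inr j ∧ ¬(i = 2 ∧ j = 2)) ∨
     (∃ i j, x = Sum.inr j ∧ y = Sum.inl i ∧ ¬(i = 2 ∧ j = 2))) := Iff.rfl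

instance T6_decAdj : DecidableRel T6graph.Adj := fun x y =>
  decidable_of_iff _ (T6_adj_iff x y).symm

/-- A 4-cycle obstructs acyclicity. -/
theorem not_acyclic_of_four {V : Type*} {G : SimpleGraph V} {a b c d : V}
    (hac : a ≠ c) (hbd : b ≠ d) (h1 : G.Adj a b) (h2 : G.Adj b c)
    (h3 : G.Adj a d) (h4 : G.Adj d c) : ¬ G.IsAcyclic := by
  intro h
  have p1 : (SimpleGraph.Walk.cons h1 (.cons h2 .nil)).IsPath := by
    simp [h1.ne, h2.ne, hac]
  have p2 : (SimpleGraph.Walk.cons h3 (.cons h4 .nil)).IsPath := by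
    simp [h3.ne, h4.ne, hac]
  have e := congrArg (fun p => p.1.support) ((h.subsingleton_path a c).elim ⟨_, p1⟩ ⟨_, p2⟩)
  simp at e
  exact hbd e

theorem exists_four_avoiding (v : Fin 3 ⊕ Fin 3) :
    ∃ a c b d, a ≠ c ∧ b ≠ d ∧
      (a ≠ v ∧ c ≠ v ∧ b ≠ v ∧ d ≠ v) ∧
      T6graph.Adj a b ∧ T6graph.Adj b c ∧ T6graph.Adj a d ∧ T6graph.Adj d c := by
  rcases v with v | v
  · by_cases h : v = 2
    · subst h
      exact ⟨.inl 0, .inl 1, .inr 0, .inr 1, by decide⟩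
    · obtain ⟨w, hw⟩ : ∃ w : Fin 3, w ≠ v ∧ w ≠ 2 := by revert v; decide
      refine ⟨.inl w, .inl 2, .inr 0, .inr 1, ?_⟩
      revert v w; decide
  · by_cases h : v = 2
    · subst h
      exact ⟨.inl 0, .inl 1, .inr 0, .inr 1, by decide⟩
    · obtain ⟨w, hw⟩ : ∃ w : Fin 3, w ≠ v ∧ w ≠ 2 := by revert v; decide
      refine ⟨.inl 0, .inl 1, .inr w, .inr 2, ?_⟩
      revert v w; decide

theorem exists_four (S : Finset (Fin 3 ⊕ Fin 3)) (hS : 4 < S.card) :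
    ∃ a ∈ S, ∃ c ∈ S, ∃ b ∈ S, ∃ d ∈ S, a ≠ c ∧ b ≠ d ∧
      T6graph.Adj a b ∧ T6graph.Adj b c ∧ T6graph.Adj a d ∧ T6graph.Adj d c := by
  have hc : Sᶜ.card ≤ 1 := by
    rw [Finset.card_compl]
    simp
    omega
  obtain ⟨v, hv⟩ := Finset.card_le_one_iff_subset_singleton.1 hc
  have key : ∀ x, x ≠ v → x ∈ S := by
    intro x hx
    by_contra hn
    exact hx (Finset.mem_singleton.1 (hv (Finset.mem_compl.2 hn)))
  obtain ⟨a, c, b, d, h1, h2, ⟨ha, hc, hb, hd⟩, h⟩ := exists_four_avoiding v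
  exact ⟨a, key a ha, c, key c hc, b, key b hb, d, key d hd, h1, h2, h⟩

/-- A graph all of whose edges contain `c` is acyclic. -/
theorem acyclic_of_center {V : Type*} {G : SimpleGraph V} (c : V)
    (h : ∀ x y, G.Adj x y → x = c ∨ y = c) : G.IsAcyclic := by
  refine SimpleGraph.IsAcyclic.anti (G' := SimpleGraph.starGraph c) ?_ (SimpleGraph.isTree_starGraph c).2
  intro x y hxy
  have := h x y hxy
  have := hxy.ne
  simp [SimpleGraph.starGraph_adj]
  tauto

/-- The largest induced forest of `T₆` has order exactly 4. -/
theorem T6graph_max_induced_forest :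
    (∃ S : Finset (Fin 3 ⊕ Fin 3), S.card = 4 ∧
      (T6graph.induce (S : Set (Fin 3 ⊕ Fin 3))).IsAcyclic) ∧
    (∀ S : Finset (Fin 3 ⊕ Fin 3),
      (T6graph.induce (S : Set (Fin 3 ⊕ Fin 3))).IsAcyclic → S.card ≤ 4) := by
  constructor
  · refine ⟨{Sum.inl 0, Sum.inr 0, Sum.inr 1, Sum.inr 2}, by decide, ?_⟩
    refine acyclic_of_center ⟨Sum.inl 0, by simp⟩ ?_
    rintro ⟨x, hx⟩ ⟨y, hy⟩ hxy
    have hxy' : T6graph.Adj x y := hxy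
    rw [T6_adj_iff] at hxy'
    simp only [Subtype.mk.injEq]
    simp at hx hy
    rcases hx with rfl | rfl | rfl | rfl <;> rcases hy with rfl | rfl | rfl | rfl <;> simp_all
  · intro S h
    by_contra hS
    obtain ⟨a, ha, c, hc, b, hb, d, hd, hac, hbd, h1, h2, h3, h4⟩ := exists_four S (by omega)
    exact not_acyclic_of_four (G := T6graph.induce (S : Set (Fin 3 ⊕ Fin 3)))
      (a := ⟨a, ha⟩) (b := ⟨b, hb⟩) (c := ⟨c, hc⟩) (d := ⟨d, hd⟩)
      (by simpa using hac) (by simpa using hbd) h1 h2 h3 h4 h
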